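/- arXiv:2210.03526 — 4 statements merged into one kernel-verified Lean document; each statement's English description precedes it below -/
import Mathlib

section
/- Let K be a natural number, a ∈ ℝ, and c, w, b ∈ ℝ^K. Define û(x) = Σ_{k=1}^K c_k tanh(w_k x + b_k) and the PDE loss L_F(c, w, b) = (1/(2π)) ∫₀^{2π} (û″(x) + a² sin(a x))² dx. Then for every index k, the partial derivative of L_F with respect to c_k satisfies |∂L_F/∂c_k| ≤ 8 (Σ_{j=1}^K |c_j| w_j² + a²) · w_k². -/
/-!
Since `tanh'' = -2 tanh (1 - tanh²)` is bounded by `2` in absolute value, the residual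
`F = û″ + a² sin (a x)` satisfies `|F| ≤ 2 ∑ |c j| w j² + a²`. The residual is affine in the
coefficient `c k`, with slope `B x = w k² tanh'' (w k x + b k)`, so the loss is a quadratic
polynomial in `c k` and its derivative is `(1/(2π)) ∫ 2 F B`. The integrand is bounded by
`2 (2 ∑ |c j| w j² + a²) (2 w k²) ≤ 8 (∑ |c j| w j² + a²) w k²`.
-/

/-- The second derivative of `tanh`, in closed form. -/
noncomputable def tanhDD (x : ℝ) : ℝ := -2 * Real.tanh x * (1 - Real.tanh x ^ 2)

lemma hasDerivAt_tanh_aux (x : ℝ) : HasDerivAt Real.tanh (1 - Real.tanh x ^ 2) x := by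
  have h := (Real.hasDerivAt_sinh x).div (Real.hasDerivAt_cosh x) (Real.cosh_pos x).ne'
  have e : Real.tanh = Real.sinh / Real.cosh := by
    ext y; exact Real.tanh_eq_sinh_div_cosh y
  rw [e]
  refine h.congr_deriv ?_
  have := (Real.cosh_pos x).ne'
  simp only [Pi.div_apply]
  field_simp

lemma abs_tanhDD_le (x : ℝ) : |tanhDD x| ≤ 2 := by
  have h := (Real.tanh_sq_lt_one x).le
  have h1 : |Real.tanh x| ≤ 1 := (Real.abs_tanh_lt_one x).le
  have h2 : |1 - Real.tanh x ^ 2| ≤ 1 := by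
    rw [abs_le]; constructor <;> nlinarith [sq_nonneg (Real.tanh x)]
  rw [tanhDD, abs_mul, abs_mul, abs_neg, abs_two]
  nlinarith [mul_le_one₀ h1 (abs_nonneg _) h2]

lemma continuous_tanhDD : Continuous tanhDD := by
  have : Continuous Real.tanh :=
    continuous_iff_continuousAt.2 fun x => (hasDerivAt_tanh_aux x).continuousAt
  unfold tanhDD
  fun_prop

lemma deriv_deriv_ansatz {K : ℕ} (c w b : Fin K → ℝ) (x : ℝ) :
    deriv (deriv fun y => ∑ k, c k * Real.tanh (w k * y + b k)) x
      = ∑ k, c k * (w k ^ 2 * tanhDD (w k * x + b k)) := by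
  have hin : ∀ k y, HasDerivAt (fun y => w k * y + b k) (w k) y := fun k y => by
    simpa using ((hasDerivAt_id y).const_mul (w k)).add_const (b k)
  have ht : ∀ k y, HasDerivAt (fun y => Real.tanh (w k * y + b k))
      ((1 - Real.tanh (w k * y + b k) ^ 2) * w k) y := fun k y =>
    HasDerivAt.comp (h₂ := Real.tanh) y (hasDerivAt_tanh_aux _) (hin k y)
  have h1 : (deriv fun y => ∑ k, c k * Real.tanh (w k * y + b k)) =
      fun y => ∑ k, c k * ((1 - Real.tanh (w k * y + b k) ^ 2) * w k) := by
    ext y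
    exact (HasDerivAt.fun_sum fun k _ => (ht k y).const_mul (c k)).deriv
  rw [h1]
  refine (HasDerivAt.fun_sum fun k _ => ?_).deriv
  refine HasDerivAt.const_mul (c k) ?_
  refine ((((ht k x).fun_pow 2).const_sub 1).mul_const (w k)).congr_deriv ?_
  simp only [tanhDD]
  push_cast
  ring

/-- A squared `L²` residual that is affine in a parameter is a quadratic polynomial in it. -/
lemma hasDerivAt_integral_sq {F B : ℝ → ℝ} (hF : Continuous F) (hB : Continuous B)
    (p q s : ℝ) :
    HasDerivAt (fun t => ∫ x in p..q, (F x + (t - s) * B x) ^ 2)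
      (∫ x in p..q, 2 * F x * B x) s := by
  have e : (fun t => ∫ x in p..q, (F x + (t - s) * B x) ^ 2) = fun t =>
      (∫ x in p..q, F x ^ 2) + (t - s) * (∫ x in p..q, 2 * F x * B x)
        + (t - s) ^ 2 * ∫ x in p..q, B x ^ 2 := by
    ext t
    rw [← intervalIntegral.integral_const_mul, ← intervalIntegral.integral_const_mul,
      ← intervalIntegral.integral_add, ← intervalIntegral.integral_add]
    · congr 1
      ext x
      ring
    all_goals exact Continuous.intervalIntegrable (by fun_prop) _ _
  rw [e]
  have hs : HasDerivAt (fun t : ℝ => t - s) 1 s := (hasDerivAt_id s).sub_const s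
  refine (((hs.mul_const (∫ x in p..q, 2 * F x * B x)).const_add
    (∫ x in p..q, F x ^ 2)).fun_add
      ((hs.fun_pow 2).mul_const (∫ x in p..q, B x ^ 2))).congr_deriv ?_
  simp

/-- Theorem 4.1 (Appendix A.7.2), c-component, original PDE: for the Poisson
loss `L_F(c,w,b) = (1/(2π)) ∫₀^{2π} (û″(x) + a² sin(a x))² dx` with
`û(x) = ∑ k, c k * tanh (w k * x + b k)`, the partial derivative with respect
to `c k` satisfies `|∂L_F/∂c_k| ≤ 8 (∑ j, |c j| w j² + a²) · w k²`. -/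
theorem stmt_11 (K : ℕ) (a : ℝ) (c w b : Fin K → ℝ)
    (L : (Fin K → ℝ) → (Fin K → ℝ) → (Fin K → ℝ) → ℝ)
    (hL : ∀ c' w' b', L c' w' b' =
      (1 / (2 * Real.pi)) * ∫ x in (0:ℝ)..(2 * Real.pi),
        (deriv (deriv fun y => ∑ k, c' k * Real.tanh (w' k * y + b' k)) x
          + a ^ 2 * Real.sin (a * x)) ^ 2)
    (k : Fin K) :
    |deriv (fun t => L (Function.update c k t) w b) (c k)| ≤
      8 * ((∑ j, |c j| * w j ^ 2) + a ^ 2) * w k ^ 2 := by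
  set F : ℝ → ℝ := fun x =>
    (∑ j, c j * (w j ^ 2 * tanhDD (w j * x + b j))) + a ^ 2 * Real.sin (a * x) with hFdef
  set B : ℝ → ℝ := fun x => w k ^ 2 * tanhDD (w k * x + b k) with hBdef
  have hc := continuous_tanhDD
  have hF : Continuous F := by fun_prop
  have hB : Continuous B := by fun_prop
  have hpi := Real.pi_pos
  have e : (fun t => L (Function.update c k t) w b) = fun t =>
      (1 / (2 * Real.pi)) * ∫ x in (0:ℝ)..(2 * Real.pi), (F x + (t - c k) * B x) ^ 2 := by
    ext t
    rw [hL]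
    congr 2
    ext x
    rw [deriv_deriv_ansatz]
    have hu : ∀ j, Function.update c k t j = c j + if j = k then t - c k else 0 := by
      intro j
      by_cases h : j = k
      · subst h; simp
      · simp [h]
    simp only [hu, add_mul, Finset.sum_add_distrib, ite_mul, zero_mul, Finset.sum_ite_eq',
      Finset.mem_univ, if_true, hFdef, hBdef]
    ring
  rw [e, ((hasDerivAt_integral_sq hF hB 0 (2 * Real.pi) (c k)).const_mul _).deriv]
  set S := ∑ j, |c j| * w j ^ 2 with hS
  have hS0 : 0 ≤ S := Finset.sum_nonneg fun j _ => by positivity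
  have hFb : ∀ x, |F x| ≤ 2 * S + a ^ 2 := by
    intro x
    refine (abs_add_le _ _).trans (add_le_add ?_ ?_)
    · refine (Finset.abs_sum_le_sum_abs _ _).trans ?_
      rw [hS, Finset.mul_sum]
      refine Finset.sum_le_sum fun j _ => ?_
      rw [abs_mul, abs_mul, abs_of_nonneg (sq_nonneg (w j))]
      have := mul_le_mul_of_nonneg_left (abs_tanhDD_le (w j * x + b j))
        (by positivity : 0 ≤ |c j| * w j ^ 2)
      linarith
    · rw [abs_mul, abs_of_nonneg (sq_nonneg a)]
      exact mul_le_of_le_one_right (sq_nonneg a) (Real.abs_sin_le_one _)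
  have hBb : ∀ x, |B x| ≤ 2 * w k ^ 2 := by
    intro x
    rw [hBdef, abs_mul, abs_of_nonneg (sq_nonneg (w k))]
    nlinarith [abs_tanhDD_le (w k * x + b k), sq_nonneg (w k)]
  have hI := intervalIntegral.norm_integral_le_of_norm_le_const (a := 0) (b := 2 * Real.pi)
    (f := fun x => 2 * F x * B x) (C := 8 * (S + a ^ 2) * w k ^ 2) (fun x _ => by
      rw [Real.norm_eq_abs, abs_mul, abs_mul, abs_two]
      have := mul_le_mul (hFb x) (hBb x) (abs_nonneg _) (by positivity)
      nlinarith [mul_nonneg (sq_nonneg a) (sq_nonneg (w k))])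
  rw [Real.norm_eq_abs, sub_zero, abs_of_pos (by positivity : 0 < 2 * Real.pi)] at hI
  rw [abs_mul, abs_of_pos (by positivity : 0 < 1 / (2 * Real.pi)), one_div_mul_eq_div,
    div_le_iff₀ (by positivity)]
  exact hI
end

section
/- Let K be a natural number, a ∈ ℝ, and c, w, b ∈ ℝ^K. Define û(x) = Σ_{k=1}^K c_k tanh(w_k x + b_k) and the PDE loss L_F(c, w, b) = (1/(2π)) ∫₀^{2π} (û″(x) + a² sin(a x))² dx. Then for every index k, the partial derivative of L_F with respect to w_k satisfies |∂L_F/∂w_k| ≤ 16π (Σ_{j=1}^K |c_j| w_j² + a²) · |c_k| (|w_k| + w_k²). -/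
/-!
Write `T = tanh z`. Since `tanh` has derivative `1 - T ^ 2`, its second and third derivatives
`τ₂` and `τ₃` are polynomials in `T`, and `|T| ≤ 1` bounds them by `1` and `2`. With the residual
`R(x) = ∑ c_j w_j² τ₂(w_j x + b_j) + a² sin (a x)`, differentiation under the integral sign gives
`∂L/∂w_k = (1/π) ∫₀^{2π} R(x) c_k (2 w_k τ₂(w_k x + b_k) + w_k² x τ₃(w_k x + b_k)) dx`.
On `[0, 2π]` the residual is at most `∑ |c_j| w_j² + a²` and the other factor at most
`|c_k| (2 |w_k| + 4π w_k²)`. Bounding the integral by the length `2π` times the supremum of the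
integrand yields `(∑ |c_j| w_j² + a²) |c_k| (4 |w_k| + 8π w_k²)`, which is below the claim.
-/

/-- The second derivative of `tanh`. -/
noncomputable def tanhDerivTwo (z : ℝ) : ℝ := -2 * Real.tanh z * (1 - Real.tanh z ^ 2)

/-- The third derivative of `tanh`. -/
noncomputable def tanhDerivThree (z : ℝ) : ℝ :=
  -2 * (1 - Real.tanh z ^ 2) * (1 - 3 * Real.tanh z ^ 2)

lemma hasDerivAt_tanh' (z : ℝ) : HasDerivAt Real.tanh (1 - Real.tanh z ^ 2) z := by
  have hc : Real.cosh z ≠ 0 := (Real.cosh_pos z).ne'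
  have h := (Real.hasDerivAt_sinh z).div (Real.hasDerivAt_cosh z) hc
  have e : Real.tanh = Real.sinh / Real.cosh := by
    funext y
    simp [Real.tanh_eq_sinh_div_cosh]
  rw [← e] at h
  refine h.congr_deriv ?_
  rw [Real.tanh_eq_sinh_div_cosh]
  field_simp

lemma continuous_tanh' : Continuous Real.tanh :=
  continuous_iff_continuousAt.2 fun z => (hasDerivAt_tanh' z).continuousAt

lemma continuous_tanhDerivTwo : Continuous tanhDerivTwo := by
  have := continuous_tanh'
  unfold tanhDerivTwo
  fun_prop

lemma continuous_tanhDerivThree : Continuous tanhDerivThree := by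
  have := continuous_tanh'
  unfold tanhDerivThree
  fun_prop

lemma hasDerivAt_tanhDerivTwo (z : ℝ) : HasDerivAt tanhDerivTwo (tanhDerivThree z) z := by
  have h := hasDerivAt_tanh' z
  have := (h.const_mul (-2)).mul ((h.pow 2).const_sub 1)
  refine this.congr_deriv ?_
  simp only [tanhDerivThree, Pi.pow_apply]
  push_cast
  ring

lemma tanh_sq_le_one (z : ℝ) : Real.tanh z ^ 2 ≤ 1 := by
  have hc := Real.cosh_pos z
  rw [Real.tanh_eq_sinh_div_cosh, div_pow, div_le_one (by positivity)]
  nlinarith [Real.cosh_sq z]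

lemma abs_tanhDerivTwo_le (z : ℝ) : |tanhDerivTwo z| ≤ 1 := by
  have h := tanh_sq_le_one z
  unfold tanhDerivTwo
  generalize Real.tanh z = T at *
  refine abs_le_of_sq_le_sq ?_ zero_le_one
  -- With `s = T ^ 2 ∈ [0, 1]`, the quantity `4 s (1 - s) ^ 2` is at most `4 s (1 - s) ≤ 1`.
  have h0 := sq_nonneg T
  have e : (-2 * T * (1 - T ^ 2)) ^ 2 = 4 * T ^ 2 * (1 - T ^ 2) ^ 2 := by ring
  rw [e]
  generalize T ^ 2 = s at *
  nlinarith [sq_nonneg (2 * s - 1), mul_nonneg (mul_nonneg h0 h0) (sub_nonneg.2 h)]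

lemma abs_tanhDerivThree_le (z : ℝ) : |tanhDerivThree z| ≤ 2 := by
  have h := tanh_sq_le_one z
  have h0 := sq_nonneg (Real.tanh z)
  unfold tanhDerivThree
  generalize Real.tanh z ^ 2 = s at *
  rw [abs_le]
  constructor <;> nlinarith [mul_nonneg h0 (sub_nonneg.2 h)]

lemma deriv_deriv_net {K : ℕ} (c w b : Fin K → ℝ) (x : ℝ) :
    deriv (deriv fun y => ∑ k, c k * Real.tanh (w k * y + b k)) x =
      ∑ k, c k * w k ^ 2 * tanhDerivTwo (w k * x + b k) := by
  have hlin (k : Fin K) (y : ℝ) : HasDerivAt (fun y => w k * y + b k) (w k) y := by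
    simpa using ((hasDerivAt_id y).const_mul (w k)).add_const (b k)
  have h1 : (deriv fun y => ∑ k, c k * Real.tanh (w k * y + b k)) =
      fun y => ∑ k, c k * ((1 - Real.tanh (w k * y + b k) ^ 2) * w k) := by
    funext y
    refine HasDerivAt.deriv (HasDerivAt.fun_sum fun k _ => ?_)
    exact ((hasDerivAt_tanh' _).comp y (hlin k y)).const_mul (c k)
  rw [h1]
  refine HasDerivAt.deriv (HasDerivAt.fun_sum fun k _ => ?_)
  have h2 := (hasDerivAt_tanh' (w k * x + b k)).comp x (hlin k x)
  refine ((((h2.pow 2).const_sub 1).mul_const (w k)).const_mul (c k)).congr_deriv ?_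
  simp only [tanhDerivTwo, Function.comp_apply]
  push_cast
  ring

/-- The residual depends on the single weight `t` through one summand only; the other summands
and the source term are collected in `G`. The square of such a residual may be differentiated in
`t` under the integral sign, since its `t`-derivative is jointly continuous and hence bounded for
`t` near `s` and `x` in the compact interval of integration. -/
lemma hasDerivAt_integral_residual (γ β s : ℝ) (G : ℝ → ℝ) (hG : Continuous G) :
    HasDerivAt
      (fun t => ∫ x in (0:ℝ)..(2 * Real.pi), (γ * t ^ 2 * tanhDerivTwo (t * x + β) + G x) ^ 2)
      (∫ x in (0:ℝ)..(2 * Real.pi), 2 * (γ * s ^ 2 * tanhDerivTwo (s * x + β) + G x) *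
        (γ * (2 * s * tanhDerivTwo (s * x + β) + s ^ 2 * (x * tanhDerivThree (s * x + β))))) s := by
  have c2 := continuous_tanhDerivTwo
  have c3 := continuous_tanhDerivThree
  set D : ℝ → ℝ → ℝ := fun t x => 2 * (γ * t ^ 2 * tanhDerivTwo (t * x + β) + G x) *
    (γ * (2 * t * tanhDerivTwo (t * x + β) + t ^ 2 * (x * tanhDerivThree (t * x + β)))) with hD
  have hDc : Continuous fun p : ℝ × ℝ => D p.1 p.2 := by
    simp only [hD]
    fun_prop
  obtain ⟨C, hC⟩ := ((isCompact_closedBall s 1).prod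
    (isCompact_uIcc (a := (0:ℝ)) (b := 2 * Real.pi))).exists_bound_of_continuousOn hDc.continuousOn
  refine (intervalIntegral.hasDerivAt_integral_of_dominated_loc_of_deriv_le (F' := D)
    (bound := fun _ => C) (Metric.closedBall_mem_nhds s one_pos) ?_ ?_ ?_ ?_ ?_ ?_).2
  · refine Filter.Eventually.of_forall fun t => Continuous.aestronglyMeasurable ?_
    fun_prop
  · refine Continuous.intervalIntegrable ?_ _ _
    fun_prop
  · refine Continuous.aestronglyMeasurable ?_
    simp only [hD]
    fun_prop
  · exact Filter.Eventually.of_forall fun x hx t ht => hC (t, x) ⟨ht, Set.uIoc_subset_uIcc hx⟩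
  · exact intervalIntegrable_const
  · refine Filter.Eventually.of_forall fun x _ t _ => ?_
    have hlin : HasDerivAt (fun t => t * x + β) x t := by
      simpa using ((hasDerivAt_id t).mul_const x).add_const β
    have h2 := (hasDerivAt_tanhDerivTwo (t * x + β)).comp t hlin
    have h3 := (((hasDerivAt_pow 2 t).const_mul γ).mul h2).add_const (G x)
    refine (h3.pow 2).congr_deriv ?_
    simp only [hD, Pi.mul_apply, Function.comp_apply]
    push_cast
    ring

theorem stmt_12 (K : ℕ) (a : ℝ) (c w b : Fin K → ℝ)
    (L : (Fin K → ℝ) → (Fin K → ℝ) → (Fin K → ℝ) → ℝ)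
    (hL : ∀ c' w' b', L c' w' b' =
      (1 / (2 * Real.pi)) * ∫ x in (0:ℝ)..(2 * Real.pi),
        (deriv (deriv fun y => ∑ k, c' k * Real.tanh (w' k * y + b' k)) x
          + a ^ 2 * Real.sin (a * x)) ^ 2)
    (k : Fin K) :
    |deriv (fun t => L c (Function.update w k t) b) (w k)| ≤
      16 * Real.pi * ((∑ j, |c j| * w j ^ 2) + a ^ 2) * (|c k| * (|w k| + w k ^ 2)) := by
  have c2 := continuous_tanhDerivTwo
  have hpi := Real.pi_pos
  set G : ℝ → ℝ := fun x =>
    ∑ j ∈ Finset.univ.erase k, c j * w j ^ 2 * tanhDerivTwo (w j * x + b j)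
      + a ^ 2 * Real.sin (a * x) with hG
  have hGc : Continuous G := by
    simp only [hG]
    fun_prop
  have hfun : (fun t => L c (Function.update w k t) b) = fun t => (1 / (2 * Real.pi)) *
      ∫ x in (0:ℝ)..(2 * Real.pi),
        (c k * t ^ 2 * tanhDerivTwo (t * x + b k) + G x) ^ 2 := by
    funext t
    simp only [hL, deriv_deriv_net]
    congr 2
    funext x
    rw [← Finset.add_sum_erase _ _ (Finset.mem_univ k), add_assoc]
    have : ∑ j ∈ Finset.univ.erase k, c j * Function.update w k t j ^ 2 *
        tanhDerivTwo (Function.update w k t j * x + b j) =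
        ∑ j ∈ Finset.univ.erase k, c j * w j ^ 2 * tanhDerivTwo (w j * x + b j) := by
      refine Finset.sum_congr rfl fun j hj => ?_
      rw [Function.update_of_ne (Finset.ne_of_mem_erase hj)]
    rw [this, Function.update_self]
  rw [hfun, ((hasDerivAt_integral_residual (c k) (b k) (w k) G hGc).const_mul _).deriv]
  set S := (∑ j, |c j| * w j ^ 2) + a ^ 2 with hS
  have hS0 : 0 ≤ S := by positivity
  have hres (x : ℝ) : |c k * w k ^ 2 * tanhDerivTwo (w k * x + b k) + G x| ≤ S := by
    simp only [hG]
    rw [← add_assoc, Finset.add_sum_erase _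
      (fun j => c j * w j ^ 2 * tanhDerivTwo (w j * x + b j)) (Finset.mem_univ k)]
    refine (abs_add_le _ _).trans (add_le_add
      ((Finset.abs_sum_le_sum_abs _ _).trans (Finset.sum_le_sum fun j _ => ?_)) ?_)
    · rw [abs_mul, abs_mul, abs_of_nonneg (sq_nonneg (w j))]
      exact mul_le_of_le_one_right (by positivity) (abs_tanhDerivTwo_le _)
    · rw [abs_mul, abs_of_nonneg (sq_nonneg a)]
      exact mul_le_of_le_one_right (by positivity) (Real.abs_sin_le_one _)
  have hint := intervalIntegral.norm_integral_le_of_norm_le_const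
    (a := (0:ℝ)) (b := 2 * Real.pi)
    (C := 2 * S * (|c k| * (2 * |w k| + w k ^ 2 * (2 * Real.pi * 2))))
    (f := fun x => 2 * (c k * w k ^ 2 * tanhDerivTwo (w k * x + b k) + G x) *
        (c k * (2 * w k * tanhDerivTwo (w k * x + b k)
          + w k ^ 2 * (x * tanhDerivThree (w k * x + b k))))) ?_
  · rw [Real.norm_eq_abs, sub_zero, abs_of_pos (by positivity : 0 < 2 * Real.pi)] at hint
    rw [abs_mul, abs_of_pos (by positivity : 0 < 1 / (2 * Real.pi))]
    refine (mul_le_mul_of_nonneg_left hint (by positivity)).trans ?_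
    have e : 1 / (2 * Real.pi) * (2 * S * (|c k| * (2 * |w k| + w k ^ 2 * (2 * Real.pi * 2)))
        * (2 * Real.pi)) = S * |c k| * (4 * |w k| + 8 * Real.pi * w k ^ 2) := by
      field_simp
      ring
    rw [e]
    have : 4 * |w k| + 8 * Real.pi * w k ^ 2 ≤ 16 * Real.pi * (|w k| + w k ^ 2) := by
      nlinarith [Real.pi_gt_three, abs_nonneg (w k), mul_nonneg hpi.le (sq_nonneg (w k)),
        mul_nonneg (sub_nonneg.2 Real.pi_gt_three.le) (abs_nonneg (w k))]
    calc _ ≤ S * |c k| * (16 * Real.pi * (|w k| + w k ^ 2)) := by gcongr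
      _ = _ := by ring
  · intro x hx
    rw [Set.uIoc_of_le (by positivity)] at hx
    rw [Real.norm_eq_abs, abs_mul, abs_mul 2, abs_mul (c k), abs_two]
    gcongr
    · exact hres x
    · refine (abs_add_le _ _).trans (add_le_add ?_ ?_)
      · rw [abs_mul, abs_mul, abs_two]
        exact mul_le_of_le_one_right (by positivity) (abs_tanhDerivTwo_le _)
      · rw [abs_mul, abs_mul, abs_of_nonneg (sq_nonneg (w k)), abs_of_pos hx.1]
        have := abs_tanhDerivThree_le (w k * x + b k)
        gcongr
        exact hx.2
end

section
/- Let K be a natural number, a ∈ ℝ, and c, w, b, c_p ∈ ℝ^K. Define û(x) = Σ_{k=1}^K c_k tanh(w_k x + b_k), p̂(x) = Σ_{k=1}^K c_{p,k} tanh(w_k x + b_k), and the transformed PDE loss L̃_F(c, w, b, c_p) = (1/(2π)) ∫₀^{2π} [ (p̂′(x) + a² sin(a x))² + (p̂(x) − û′(x))² ] dx. Then for every index k, the partial derivative of L̃_F with respect to c_k satisfies |∂L̃_F/∂c_k| ≤ 2 (Σ_{j=1}^K |c_{p,j}| + Σ_{j=1}^K |c_j| |w_j|) · |w_k|. -/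
/-! The derivative `û′` is linear in the outer weights `c`, so along the line `c_k ↦ t` the residual
`p̂ - û′` changes by `-(t - c_k) g`, where `g x = w_k (1 - tanh² (w_k x + b_k))`, and the loss is an
exact quadratic polynomial in `t - c_k`. Its linear coefficient is `-2` times the mean of
`(p̂ - û′) g` over `[0, 2π]`; no differentiation under the integral sign is needed. The bound
follows from `|tanh| ≤ 1` and `0 ≤ 1 - tanh² ≤ 1`.
-/

theorem hasDerivAt_tanh_affine (w b x : ℝ) :
    HasDerivAt (fun y => Real.tanh (w * y + b)) (w * (1 - Real.tanh (w * x + b) ^ 2)) x := by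
  have h1 : HasDerivAt (fun y : ℝ => w * y + b) w x := by
    simpa using ((hasDerivAt_id x).const_mul w).add_const b
  have hc : Real.cosh (w * x + b) ≠ 0 := (Real.cosh_pos _).ne'
  have h2 := (h1.sinh).div (h1.cosh) hc
  have e : (fun y => Real.tanh (w * y + b)) =
      (fun y => Real.sinh (w * y + b)) / (fun y => Real.cosh (w * y + b)) := by
    funext y
    simp [Real.tanh_eq_sinh_div_cosh]
  rw [e]
  refine h2.congr_deriv ?_
  rw [Real.tanh_eq_sinh_div_cosh]
  field_simp

theorem deriv_tanh_network {K : ℕ} (c w b : Fin K → ℝ) (x : ℝ) :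
    deriv (fun y => ∑ k, c k * Real.tanh (w k * y + b k)) x =
      ∑ k, c k * (w k * (1 - Real.tanh (w k * x + b k) ^ 2)) :=
  (HasDerivAt.fun_sum fun k _ => (hasDerivAt_tanh_affine (w k) (b k) x).const_mul (c k)).deriv

theorem abs_one_sub_tanh_sq_le (z : ℝ) : |1 - Real.tanh z ^ 2| ≤ 1 := by
  have h1 := Real.tanh_lt_one z
  have h2 := Real.neg_one_lt_tanh z
  rw [abs_le]
  constructor <;> nlinarith

theorem continuous_tanh_affine (w b : ℝ) : Continuous fun x => Real.tanh (w * x + b) :=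
  continuous_iff_continuousAt.2 fun x => (hasDerivAt_tanh_affine w b x).continuousAt

/-- The integral of `P + (R - s g)²` is a quadratic polynomial in `s`, so its derivative at `s = 0`
is read off from the linear coefficient. -/
theorem hasDerivAt_integral_quadratic {P R g : ℝ → ℝ} (hP : Continuous P) (hR : Continuous R)
    (hg : Continuous g) (u v t₀ : ℝ) :
    HasDerivAt (fun t => ∫ x in u..v, (P x + (R x - (t - t₀) * g x) ^ 2))
      (-2 * ∫ x in u..v, R x * g x) t₀ := by
  have e : (fun t => ∫ x in u..v, (P x + (R x - (t - t₀) * g x) ^ 2)) = fun t =>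
      (∫ x in u..v, (P x + R x ^ 2)) + (-2 * (t - t₀)) * (∫ x in u..v, R x * g x)
        + (t - t₀) ^ 2 * ∫ x in u..v, g x ^ 2 := by
    funext t
    rw [← intervalIntegral.integral_const_mul, ← intervalIntegral.integral_const_mul,
      ← intervalIntegral.integral_add, ← intervalIntegral.integral_add]
    · congr 1
      funext x
      ring
    all_goals exact Continuous.intervalIntegrable (by fun_prop) _ _
  rw [e]
  have h0 : HasDerivAt (fun t : ℝ => t - t₀) 1 t₀ := (hasDerivAt_id t₀).sub_const t₀
  have h := (((h0.const_mul (-2)).mul_const (∫ x in u..v, R x * g x)).const_add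
    (∫ x in u..v, (P x + R x ^ 2))).add ((h0.pow 2).mul_const (∫ x in u..v, g x ^ 2))
  refine h.congr_deriv ?_
  simp


/-- Theorem 4.1 (Appendix A.7.2), c-component, transformed PDE (extra fields):
for the loss `L̃_F(c,w,b,c_p) = (1/(2π)) ∫₀^{2π} [(p̂′(x) + a² sin(a x))²
+ (p̂(x) - û′(x))²] dx` with `û = ∑ k, c k * tanh (w k * x + b k)` and
`p̂ = ∑ k, c_p k * tanh (w k * x + b k)`, the partial derivative with respect
to `c k` satisfies `|∂L̃_F/∂c_k| ≤ 2 (∑ j |c_p j| + ∑ j |c j| |w j|) · |w k|`. -/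
theorem stmt_14 (K : ℕ) (a : ℝ) (c w b cp : Fin K → ℝ)
    (L : (Fin K → ℝ) → (Fin K → ℝ) → (Fin K → ℝ) → (Fin K → ℝ) → ℝ)
    (hL : ∀ c' w' b' cp', L c' w' b' cp' =
      (1 / (2 * Real.pi)) * ∫ x in (0:ℝ)..(2 * Real.pi),
        ((deriv (fun y => ∑ k, cp' k * Real.tanh (w' k * y + b' k)) x
            + a ^ 2 * Real.sin (a * x)) ^ 2
         + ((∑ k, cp' k * Real.tanh (w' k * x + b' k))
            - deriv (fun y => ∑ k, c' k * Real.tanh (w' k * y + b' k)) x) ^ 2))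
    (k : Fin K) :
    |deriv (fun t => L (Function.update c k t) w b cp) (c k)| ≤
      2 * ((∑ j, |cp j|) + ∑ j, |c j| * |w j|) * |w k| := by
  set P : ℝ → ℝ := fun x =>
    ((∑ j, cp j * (w j * (1 - Real.tanh (w j * x + b j) ^ 2))) + a ^ 2 * Real.sin (a * x)) ^ 2
    with hP
  set R : ℝ → ℝ := fun x => (∑ j, cp j * Real.tanh (w j * x + b j))
    - ∑ j, c j * (w j * (1 - Real.tanh (w j * x + b j) ^ 2)) with hR
  set g : ℝ → ℝ := fun x => w k * (1 - Real.tanh (w k * x + b k) ^ 2) with hg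
  have hT := fun j => continuous_tanh_affine (w j) (b j)
  have hPc : Continuous P := by fun_prop
  have hRc : Continuous R := by fun_prop
  have hgc : Continuous g := by fun_prop
  have hsum : ∀ t x, ∑ j, Function.update c k t j * (w j * (1 - Real.tanh (w j * x + b j) ^ 2)) =
      (∑ j, c j * (w j * (1 - Real.tanh (w j * x + b j) ^ 2))) + (t - c k) * g x := by
    intro t x
    rw [← sub_eq_iff_eq_add', ← Finset.sum_sub_distrib, Finset.sum_eq_single k]
    · simp only [Function.update_self, hg]
      ring
    · intro j _ hj
      simp [Function.update_of_ne hj]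
    · simp
  have hfun : (fun t => L (Function.update c k t) w b cp) = fun t =>
      (1 / (2 * Real.pi)) * ∫ x in (0:ℝ)..(2 * Real.pi),
        (P x + (R x - (t - c k) * g x) ^ 2) := by
    funext t
    rw [hL]
    simp only [deriv_tanh_network, hsum]
    simp only [hP, hR, sub_sub]
  rw [hfun, ((hasDerivAt_integral_quadratic hPc hRc hgc 0 (2 * Real.pi) (c k)).const_mul _).deriv]
  have hRb : ∀ x, |R x| ≤ (∑ j, |cp j|) + ∑ j, |c j| * |w j| := by
    intro x
    refine (abs_sub _ _).trans (add_le_add ?_ ?_)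
    · refine (Finset.abs_sum_le_sum_abs _ _).trans (Finset.sum_le_sum fun j _ => ?_)
      rw [abs_mul]
      exact mul_le_of_le_one_right (abs_nonneg _)
        (abs_le.2 ⟨(Real.neg_one_lt_tanh _).le, (Real.tanh_lt_one _).le⟩)
    · refine (Finset.abs_sum_le_sum_abs _ _).trans (Finset.sum_le_sum fun j _ => ?_)
      rw [abs_mul, abs_mul, ← mul_assoc]
      exact mul_le_of_le_one_right (by positivity) (abs_one_sub_tanh_sq_le _)
  have hgb : ∀ x, |g x| ≤ |w k| := by
    intro x
    simp only [hg, abs_mul]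
    exact mul_le_of_le_one_right (abs_nonneg _) (abs_one_sub_tanh_sq_le _)
  set M := (∑ j, |cp j|) + ∑ j, |c j| * |w j| with hM
  have hpi := Real.pi_pos
  have hI : |∫ x in (0:ℝ)..(2 * Real.pi), R x * g x| ≤ M * |w k| * (2 * Real.pi) := by
    have h := intervalIntegral.norm_integral_le_of_norm_le_const (a := 0) (b := 2 * Real.pi)
      (f := fun x => R x * g x) (C := M * |w k|) fun x _ => by
        rw [Real.norm_eq_abs, abs_mul]
        exact mul_le_mul (hRb x) (hgb x) (abs_nonneg _) ((abs_nonneg _).trans (hRb x))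
    rwa [sub_zero, abs_of_pos (by positivity : 0 < 2 * Real.pi)] at h
  rw [abs_mul, abs_mul, abs_of_pos (by positivity : 0 < 1 / (2 * Real.pi))]
  calc 1 / (2 * Real.pi) * (|(-2 : ℝ)| * |∫ x in (0:ℝ)..(2 * Real.pi), R x * g x|)
      ≤ 1 / (2 * Real.pi) * (|(-2 : ℝ)| * (M * |w k| * (2 * Real.pi))) := by gcongr
    _ = 2 * M * |w k| := by
      rw [abs_neg, abs_two]
      field_simp
end

section
/- Let d, m be natural numbers, let S ⊆ ℝ^d, and let γ₁, …, γ_m be nonempty subsets of S. For each i suppose: (i) a continuous function l^{γᵢ} : S → ℝ with l^{γᵢ}(x) = 0 for all x ∈ γᵢ, and constants Cᵢ > 0 with l^{γᵢ}(x) ≥ Cᵢ for all x ∈ γ_k with k ≠ i; (ii) a function p̃^{γᵢ} : S → ℝ^{d+1} that is bounded on S (‖p̃^{γᵢ}(x)‖ ≤ M for all x ∈ S and all i, for some M ≥ 0); (iii) a function ñ : S → ℝ^{d+1} with ‖ñ(x)‖ = 1 for all x, and functions g̃ᵢ : γᵢ → ℝ such that ñ(x) · p̃^{γᵢ}(x)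 = g̃ᵢ(x) for all x ∈ γᵢ. For β_s ∈ ℝ set αₖ = β_s / Cₖ. Then for every ε > 0 there exists β_s⁰ ∈ ℝ such that for all β_s > β_s⁰, all i ∈ {1, …, m}, and all x ∈ γᵢ, one has | ñ(x) · Σ_{k=1}^m exp(−αₖ l^{γₖ}(x)) p̃^{γₖ}(x) − g̃ᵢ(x) | < ε. -/
/-! On `γ i` the `i`-th summand has weight `exp 0 = 1`, so its inner product with the normal is
exactly `g i x`. For `k ≠ i` the bound `C k ≤ l k x` makes the weight at most `exp (-β)` once
`0 ≤ β`, so each remaining term contributes at most `exp (-β) * M` by Cauchy–Schwarz. The total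
error is therefore at most `m * M * exp (-β)`, uniformly in `i` and `x`, and this tends to zero. -/

open scoped RealInnerProductSpace BigOperators

/-- Appendix A.4 (first theorem): exact boundary satisfaction of the
hard-constraint ansatz. Given disjoint boundary components `γ i ⊆ S`,
continuous extended distance functions `l i` vanishing on `γ i` and bounded
below by `C i > 0` on the other components, bounded boundary networks `p i`
each satisfying its boundary condition `⟪n x, p i x⟫ = g i x` on `γ i`, and
hardness weights `α k = β / C k`, for every `ε > 0` there is `β₀` such that
for all `β > β₀`, all `i`, and all `x ∈ γ i`, the exponentially weighted
combination satisfies `|⟪n x, ∑ k, exp (-(β / C k) * l k x) • p k x⟫ - g i x| < ε`. -/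
theorem stmt_18 (d m : ℕ) (S : Set (EuclideanSpace ℝ (Fin d)))
    (γ : Fin m → Set (EuclideanSpace ℝ (Fin d)))
    (hγ_ne : ∀ i, (γ i).Nonempty) (hγS : ∀ i, γ i ⊆ S)
    (l : Fin m → EuclideanSpace ℝ (Fin d) → ℝ)
    (hl_cont : ∀ i, ContinuousOn (l i) S)
    (hl_zero : ∀ i, ∀ x ∈ γ i, l i x = 0)
    (C : Fin m → ℝ) (hC : ∀ i, 0 < C i)
    (hl_ge : ∀ i k, i ≠ k → ∀ x ∈ γ k, C i ≤ l i x)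
    (p : Fin m → EuclideanSpace ℝ (Fin d) → EuclideanSpace ℝ (Fin (d + 1)))
    (M : ℝ) (hM : 0 ≤ M) (hp_bdd : ∀ i, ∀ x ∈ S, ‖p i x‖ ≤ M)
    (n : EuclideanSpace ℝ (Fin d) → EuclideanSpace ℝ (Fin (d + 1)))
    (hn : ∀ x ∈ S, ‖n x‖ = 1)
    (g : Fin m → EuclideanSpace ℝ (Fin d) → ℝ)
    (hbc : ∀ i, ∀ x ∈ γ i, ⟪n x, p i x⟫ = g i x) :
    ∀ ε > 0, ∃ β₀ : ℝ, ∀ β > β₀, ∀ i, ∀ x ∈ γ i,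
      |⟪n x, ∑ k, Real.exp (-(β / C k) * l k x) • p k x⟫ - g i x| < ε := by
  intro ε hε
  have hlim : Filter.Tendsto (fun β : ℝ => (m : ℝ) * M * Real.exp (-β)) Filter.atTop (nhds 0) := by
    simpa using Real.tendsto_exp_neg_atTop_nhds_zero.const_mul ((m : ℝ) * M)
  obtain ⟨b, hb⟩ := Filter.eventually_atTop.1 (hlim.eventually (gt_mem_nhds hε))
  refine ⟨max b 0, fun β hβ i x hx => ?_⟩
  have hβb : b ≤ β := (le_max_left b 0).trans hβ.le
  have hβ0 : 0 ≤ β := (le_max_right b 0).trans hβ.le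
  have hxS := hγS i hx
  have hterm : ∀ k ∈ Finset.univ.erase i,
      |⟪n x, Real.exp (-(β / C k) * l k x) • p k x⟫| ≤ M * Real.exp (-β) := by
    intro k hk
    have hle : β ≤ β / C k * l k x := by
      calc β = β / C k * C k := (div_mul_cancel₀ β (hC k).ne').symm
        _ ≤ β / C k * l k x :=
          mul_le_mul_of_nonneg_left (hl_ge k i (Finset.ne_of_mem_erase hk) x hx)
            (div_nonneg hβ0 (hC k).le)
    have hexp : Real.exp (-(β / C k) * l k x) ≤ Real.exp (-β) :=
      Real.exp_le_exp.2 (by linarith)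
    calc |⟪n x, Real.exp (-(β / C k) * l k x) • p k x⟫|
        ≤ ‖n x‖ * ‖Real.exp (-(β / C k) * l k x) • p k x‖ := abs_real_inner_le_norm _ _
      _ = Real.exp (-(β / C k) * l k x) * ‖p k x‖ := by
        rw [hn x hxS, one_mul, norm_smul, Real.norm_eq_abs, Real.abs_exp]
      _ ≤ Real.exp (-β) * M :=
        mul_le_mul hexp (hp_bdd k x hxS) (norm_nonneg _) (Real.exp_pos _).le
      _ = M * Real.exp (-β) := mul_comm _ _
  have hsplit : ⟪n x, ∑ k, Real.exp (-(β / C k) * l k x) • p k x⟫ - g i x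
      = ∑ k ∈ Finset.univ.erase i, ⟪n x, Real.exp (-(β / C k) * l k x) • p k x⟫ := by
    rw [inner_sum, ← Finset.add_sum_erase _ _ (Finset.mem_univ i), hl_zero i x hx, mul_zero,
      Real.exp_zero, one_smul, hbc i x hx, add_sub_cancel_left]
  rw [hsplit]
  calc _ ≤ ∑ k ∈ Finset.univ.erase i, |⟪n x, Real.exp (-(β / C k) * l k x) • p k x⟫| :=
        Finset.abs_sum_le_sum_abs _ _
    _ ≤ ∑ _k ∈ Finset.univ.erase i, M * Real.exp (-β) := Finset.sum_le_sum hterm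
    _ ≤ ∑ _k : Fin m, M * Real.exp (-β) :=
        Finset.sum_le_sum_of_subset_of_nonneg (Finset.erase_subset _ _)
          (fun _ _ _ => mul_nonneg hM (Real.exp_pos _).le)
    _ = m * M * Real.exp (-β) := by simp [mul_assoc]
    _ < ε := hb β hβb
end
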